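/- For every ε > 0 there exists a finite family of parallelograms P₁, ..., P_S in [0,1]² whose left sides cover {0} × [ε, 1−ε] and such that for every strip J of the form [0,x₀]×[0,1] or [0,1]×[0,y₀] one has |λ²(⋃_s P_s ∩ J) − (3/4)·λ²(J)| < ε. -/

import Mathlib

open MeasureTheory Set

/-- The parallelogram `conv{(0,b₁),(0,b₁+δ),(1,b₂),(1,b₂+δ)}`. -/
noncomputable def Par (b₁ b₂ δ : ℝ) : Set (ℝ × ℝ) :=
  convexHull ℝ {(0, b₁), (0, b₁ + δ), (1, b₂), (1, b₂ + δ)}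

/-- A valid parallelogram datum: `δ > 0` and `b₁, b₂ ∈ [0, 1 - δ]`. -/
def GoodPar (b₁ b₂ δ : ℝ) : Prop :=
  0 < δ ∧ b₁ ∈ Icc 0 (1 - δ) ∧ b₂ ∈ Icc 0 (1 - δ)

/-- Square wave of period one. -/
noncomputable def chi (u : ℝ) : ℝ := if Int.fract u < 1 / 2 then 1 else 0

lemma chi_meas : Measurable chi := by
  unfold chi
  exact Measurable.ite (measurableSet_lt measurable_fract measurable_const) measurable_const
    measurable_const

lemma chi_nonneg (u : ℝ) : 0 ≤ chi u := by unfold chi; split_ifs <;> norm_num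
lemma chi_le (u : ℝ) : chi u ≤ 1 := by unfold chi; split_ifs <;> norm_num

lemma chi_half (u : ℝ) : chi u + chi (u + 1 / 2) = 1 := by
  have h0 := Int.fract_nonneg u
  have h1 := Int.fract_lt_one u
  have h2 := Int.floor_add_fract u
  unfold chi
  by_cases h : Int.fract u < 1 / 2
  · have : Int.fract (u + 1 / 2) = Int.fract u + 1 / 2 := by
      rw [Int.fract_eq_iff]
      exact ⟨by linarith, by linarith, ⌊u⌋, by linarith⟩
    rw [this, if_pos h, if_neg (by linarith)]; norm_num
  · have : Int.fract (u + 1 / 2) = Int.fract u - 1 / 2 := by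
      rw [Int.fract_eq_iff]
      exact ⟨by linarith, by linarith, ⌊u⌋ + 1, by push_cast; linarith⟩
    rw [this, if_neg h, if_pos (by linarith)]; norm_num

lemma int_of_bdd {f : ℝ → ℝ} (hf : Measurable f) (h0 : ∀ u, 0 ≤ f u) (h1 : ∀ u, f u ≤ 1)
    (a b : ℝ) : IntervalIntegrable f volume a b := by
  apply IntervalIntegrable.mono_fun (g := f) (f := fun _ => (1 : ℝ)) intervalIntegrable_const
    hf.aestronglyMeasurable
  filter_upwards with u
  rw [Real.norm_of_nonneg (h0 u)]
  simpa using h1 u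

lemma chi_int (a b : ℝ) : IntervalIntegrable chi volume a b :=
  int_of_bdd chi_meas chi_nonneg chi_le a b

lemma chi_short (a : ℝ) : 0 ≤ (∫ u in a..(a + 1 / 2), chi u) ∧
    (∫ u in a..(a + 1 / 2), chi u) ≤ 1 / 2 := by
  constructor
  · exact intervalIntegral.integral_nonneg (by linarith) (fun u _ => chi_nonneg u)
  · have := intervalIntegral.integral_mono_on (a := a) (b := a + 1 / 2) (by linarith)
      (chi_int a (a + 1 / 2)) (intervalIntegrable_const (c := (1 : ℝ))) (fun u _ => chi_le u)
    simpa using this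

lemma chi_integral (a b : ℝ) : |(∫ u in a..b, chi u) - (b - a) / 2| ≤ 1 / 4 := by
  have e1 : (∫ u in a..b, chi u) + ∫ u in (a + 1 / 2)..(b + 1 / 2), chi u = b - a := by
    rw [← intervalIntegral.integral_comp_add_right chi (1 / 2),
      ← intervalIntegral.integral_add (chi_int a b)]
    · simp only [chi_half]; simp
    · exact int_of_bdd (chi_meas.comp (by fun_prop)) (fun u => chi_nonneg _) (fun u => chi_le _) a b
  have e2 := intervalIntegral.integral_add_adjacent_intervals (chi_int a b) (chi_int b (b + 1 / 2))
  have e3 := intervalIntegral.integral_add_adjacent_intervals (chi_int a (a + 1 / 2))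
    (chi_int (a + 1 / 2) (b + 1 / 2))
  have ha := chi_short a
  have hb := chi_short b
  rw [abs_le]
  constructor <;> linarith [ha.1, ha.2, hb.1, hb.2]

lemma chi_integral_sub (c m t : ℝ) (hm : 0 < m) :
    |(∫ x in (0 : ℝ)..t, chi (c - m * x)) - t / 2| ≤ 1 / (4 * m) := by
  rw [intervalIntegral.integral_comp_sub_mul _ hm.ne']
  have h := chi_integral (c - m * t) (c - m * 0)
  have : m⁻¹ • (∫ x in (c - m * t)..(c - m * 0), chi x) - t / 2
      = m⁻¹ * ((∫ x in (c - m * t)..(c - m * 0), chi x) - ((c - m * 0) - (c - m * t)) / 2) := by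
    simp only [smul_eq_mul]; field_simp; ring
  rw [this, abs_mul, abs_of_pos (inv_pos.2 hm)]
  calc m⁻¹ * _ ≤ m⁻¹ * (1 / 4) := by gcongr
    _ = _ := by field_simp

lemma chi_integral_mul (m t : ℝ) (hm : 0 < m) :
    |(∫ x in (0 : ℝ)..t, chi (m * x)) - t / 2| ≤ 1 / (4 * m) := by
  rw [intervalIntegral.integral_comp_mul_left _ hm.ne']
  have h := chi_integral (m * 0) (m * t)
  have : m⁻¹ • (∫ x in (m * 0)..(m * t), chi x) - t / 2
      = m⁻¹ * ((∫ x in (m * 0)..(m * t), chi x) - (m * t - m * 0) / 2) := by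
    simp only [smul_eq_mul]; field_simp; ring
  rw [this, abs_mul, abs_of_pos (inv_pos.2 hm)]
  calc m⁻¹ * _ ≤ m⁻¹ * (1 / 4) := by gcongr
    _ = _ := by field_simp

lemma mem_Par (b₁ b₂ δ x y : ℝ) (hδ : 0 < δ) : (x, y) ∈ Par b₁ b₂ δ ↔
    0 ≤ x ∧ x ≤ 1 ∧ b₁ + (b₂ - b₁) * x ≤ y ∧ y ≤ b₁ + (b₂ - b₁) * x + δ := by
  constructor
  · intro h
    have hc : Convex ℝ {p : ℝ × ℝ | 0 ≤ p.1 ∧ p.1 ≤ 1 ∧ b₁ + (b₂ - b₁) * p.1 ≤ p.2 ∧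
        p.2 ≤ b₁ + (b₂ - b₁) * p.1 + δ} := by
      rintro ⟨p1, p2⟩ ⟨h1, h2, h3, h4⟩ ⟨q1, q2⟩ ⟨k1, k2, k3, k4⟩ a b ha hb hab
      obtain rfl : b = 1 - a := by linarith
      simp only [mem_ofPred_eq, Prod.smul_mk, Prod.mk_add_mk, smul_eq_mul] at *
      refine ⟨by positivity, ?_, ?_, ?_⟩
      · nlinarith [mul_le_mul_of_nonneg_left h2 ha, mul_le_mul_of_nonneg_left k2 hb]
      · nlinarith [mul_le_mul_of_nonneg_left h3 ha, mul_le_mul_of_nonneg_left k3 hb]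
      · nlinarith [mul_le_mul_of_nonneg_left h4 ha, mul_le_mul_of_nonneg_left k4 hb]
    have := convexHull_min ?_ hc h
    · exact this
    · intro p hp
      simp only [mem_insert_iff, mem_singleton_iff] at hp
      rcases hp with rfl | rfl | rfl | rfl <;>
        refine ⟨?_, ?_, ?_, ?_⟩ <;> simp <;> linarith
  · rintro ⟨h1, h2, h3, h4⟩
    have hC := convex_convexHull ℝ ({(0, b₁), (0, b₁ + δ), (1, b₂), (1, b₂ + δ)} : Set (ℝ × ℝ))
    have hs := subset_convexHull ℝ ({(0, b₁), (0, b₁ + δ), (1, b₂), (1, b₂ + δ)} : Set (ℝ × ℝ))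
    set t := (y - (b₁ + (b₂ - b₁) * x)) / δ with ht
    have ht0 : 0 ≤ t := div_nonneg (by linarith) hδ.le
    have ht1 : t ≤ 1 := by rw [ht, div_le_one hδ]; linarith
    have hty : t * δ = y - (b₁ + (b₂ - b₁) * x) := by rw [ht]; field_simp
    have A : ((0 : ℝ), b₁ + t * δ) ∈ Par b₁ b₂ δ := by
      have := hC (hs (by simp : ((0 : ℝ), b₁) ∈ _)) (hs (by simp : ((0 : ℝ), b₁ + δ) ∈ _))
        (by linarith : 0 ≤ 1 - t) ht0 (by ring)
      unfold Par
      convert this using 1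
      ext <;> simp; ring
    have B : ((1 : ℝ), b₂ + t * δ) ∈ Par b₁ b₂ δ := by
      have := hC (hs (by simp : ((1 : ℝ), b₂) ∈ _)) (hs (by simp : ((1 : ℝ), b₂ + δ) ∈ _))
        (by linarith : 0 ≤ 1 - t) ht0 (by ring)
      unfold Par
      convert this using 1
      ext <;> simp; ring
    have := hC A B (by linarith : 0 ≤ 1 - x) h1 (by ring)
    unfold Par
    convert this using 1
    ext
    · simp
    · simp [hty]; ring

/-- The model set. -/
def ESet (N m : ℝ) : Set (ℝ × ℝ) :=
  {p | Int.fract (N * p.2) < 1 / 2 ∨ ¬ Int.fract (N * p.2 - m * p.1) < 1 / 2}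

lemma ESet_meas (N m : ℝ) : MeasurableSet (ESet N m) := by
  unfold ESet
  apply MeasurableSet.union
  · have h : Measurable fun p : ℝ × ℝ => Int.fract (N * p.2) :=
      measurable_fract.comp (by fun_prop)
    exact measurableSet_lt h measurable_const
  · have h : Measurable fun p : ℝ × ℝ => Int.fract (N * p.2 - m * p.1) :=
      measurable_fract.comp (by fun_prop)
    exact (measurableSet_lt h measurable_const).compl

lemma box_vol (x₀ y₀ : ℝ) (hx : 0 ≤ x₀) (hy : 0 ≤ y₀) :
    volume.real (Icc (0 : ℝ) x₀ ×ˢ Icc (0 : ℝ) y₀) = x₀ * y₀ := by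
  rw [Measure.volume_eq_prod, measureReal_prod_prod]
  simp [hx, hy]

lemma ESet_vol (N m x₀ y₀ : ℝ) (hN : 0 < N) (hm : 0 < m) (hx : x₀ ∈ Icc (0 : ℝ) 1)
    (hy : y₀ ∈ Icc (0 : ℝ) 1) :
    |volume.real (ESet N m ∩ Icc (0 : ℝ) x₀ ×ˢ Icc (0 : ℝ) y₀) - 3 / 4 * (x₀ * y₀)|
      ≤ 1 / (4 * m) + 1 / (4 * N) := by
  set B := Icc (0 : ℝ) x₀ ×ˢ Icc (0 : ℝ) y₀ with hB
  have hBm : MeasurableSet B := measurableSet_Icc.prod measurableSet_Icc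
  have hBf : volume B ≠ ⊤ := (isCompact_Icc.prod isCompact_Icc).measure_lt_top.ne
  let g : ℝ × ℝ → ℝ := fun p => (1 - chi (N * p.2)) * chi (N * p.2 - m * p.1)
  have hgm : Measurable g := by
    have h1 : Measurable fun p : ℝ × ℝ => chi (N * p.2) := chi_meas.comp (by fun_prop)
    have h2 : Measurable fun p : ℝ × ℝ => chi (N * p.2 - m * p.1) := chi_meas.comp (by fun_prop)
    exact (measurable_const.sub h1).mul h2
  have hg0 : ∀ p, ‖g p‖ ≤ 1 := by
    intro p
    have a := chi_nonneg (N * p.2)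
    have b := chi_le (N * p.2)
    have c := chi_nonneg (N * p.2 - m * p.1)
    have d := chi_le (N * p.2 - m * p.1)
    rw [Real.norm_eq_abs, abs_le]
    constructor <;> simp only [g] <;> nlinarith
  have hgi : IntegrableOn g B := by
    apply Measure.integrableOn_of_bounded (M := 1) hBf hgm.aestronglyMeasurable
    filter_upwards with p using hg0 p
  have hind : ∀ p, g p = (ESet N m)ᶜ.indicator (fun _ => (1 : ℝ)) p := by
    intro p
    simp only [g, chi, Set.indicator, ESet, mem_compl_iff, mem_ofPred_eq]
    split_ifs <;> simp_all <;> linarith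
  have e1 : volume.real (ESet N m ∩ B) = x₀ * y₀ - ∫ p in B, g p := by
    have h1 : (∫ p in B, g p) = volume.real ((ESet N m)ᶜ ∩ B) := by
      simp only [hind]
      rw [integral_indicator (ESet_meas N m).compl]
      simp [measureReal_restrict_apply (ESet_meas N m).compl]
    have h2 := measureReal_inter_add_sdiff (μ := volume) (s := B) (ESet_meas N m) hBf
    rw [box_vol _ _ hx.1 hy.1] at h2
    rw [h1, inter_comm (ESet N m), inter_comm (ESet N m)ᶜ, ← sdiff_eq]
    linarith
  have e2 : (∫ p in B, g p) = ∫ y in (0 : ℝ)..y₀, (1 - chi (N * y)) *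
      ∫ x in (0 : ℝ)..x₀, chi (N * y - m * x) := by
    rw [intervalIntegral.integral_of_le hy.1, ← integral_Icc_eq_integral_Ioc]
    have : (volume : Measure (ℝ × ℝ)).restrict B
        = (volume.restrict (Icc 0 x₀)).prod (volume.restrict (Icc 0 y₀)) := by
      rw [Measure.prod_restrict]; rfl
    have hgi' : Integrable g (volume.restrict B) := hgi
    rw [this] at hgi' ⊢
    rw [integral_prod_symm _ hgi']
    congr 1
    ext y
    simp only [g]
    rw [integral_const_mul, intervalIntegral.integral_of_le hx.1, ← integral_Icc_eq_integral_Ioc]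
  set I : ℝ → ℝ := fun y => ∫ x in (0 : ℝ)..x₀, chi (N * y - m * x) with hI
  have hIb : ∀ y, |I y - x₀ / 2| ≤ 1 / (4 * m) := fun y => chi_integral_sub _ _ _ hm
  have hcN : IntervalIntegrable (fun y => chi (N * y)) volume 0 y₀ :=
    int_of_bdd (chi_meas.comp (by fun_prop)) (fun u => chi_nonneg _) (fun u => chi_le _) _ _
  have hT : IntervalIntegrable (fun y => (1 - chi (N * y)) * (x₀ / 2)) volume 0 y₀ :=
    (intervalIntegrable_const.sub hcN).mul_const _
  have hS : IntervalIntegrable (fun y => (1 - chi (N * y)) * I y) volume 0 y₀ := by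
    rw [intervalIntegrable_iff_integrableOn_Icc_of_le hy.1]
    have : (volume : Measure (ℝ × ℝ)).restrict B
        = (volume.restrict (Icc 0 x₀)).prod (volume.restrict (Icc 0 y₀)) := by
      rw [Measure.prod_restrict]; rfl
    have hgi' : Integrable g (volume.restrict B) := hgi
    rw [this] at hgi'
    have := hgi'.integral_prod_right
    refine this.congr ?_
    filter_upwards with y
    simp only [g, hI]
    rw [integral_const_mul, intervalIntegral.integral_of_le hx.1, ← integral_Icc_eq_integral_Ioc]
  have e3 : |(∫ y in (0 : ℝ)..y₀, (1 - chi (N * y)) * I y) -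
      ∫ y in (0 : ℝ)..y₀, (1 - chi (N * y)) * (x₀ / 2)| ≤ 1 / (4 * m) := by
    rw [← intervalIntegral.integral_sub hS hT]
    have := intervalIntegral.norm_integral_le_of_norm_le_const (a := 0) (b := y₀)
      (C := 1 / (4 * m))
      (f := fun y => (1 - chi (N * y)) * I y - (1 - chi (N * y)) * (x₀ / 2)) ?_
    · rw [Real.norm_eq_abs, sub_zero, abs_of_nonneg hy.1] at this
      refine this.trans ?_
      have : 0 ≤ 1 / (4 * m) := by positivity
      nlinarith [hy.2]
    · intro y _
      rw [← mul_sub, Real.norm_eq_abs, abs_mul, abs_of_nonneg (by linarith [chi_le (N * y)])]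
      have := hIb y
      have h3 := abs_nonneg (I y - x₀ / 2)
      nlinarith [chi_nonneg (N * y), chi_le (N * y)]
  have e4 : (∫ y in (0 : ℝ)..y₀, (1 - chi (N * y)) * (x₀ / 2))
      = (y₀ - ∫ y in (0 : ℝ)..y₀, chi (N * y)) * (x₀ / 2) := by
    rw [intervalIntegral.integral_mul_const, intervalIntegral.integral_sub _ hcN]
    · simp
    · exact intervalIntegrable_const
  have e5 := chi_integral_mul N y₀ hN
  rw [e4] at e3
  rw [e1, e2]
  rw [abs_le] at e3 e5 ⊢
  set Q := ∫ y in (0 : ℝ)..y₀, chi (N * y)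
  have : 0 ≤ 1 / (4 * N) := by positivity
  have hx0 := hx.1
  have hx1 := hx.2
  constructor <;> nlinarith [mul_le_mul_of_nonneg_right e5.1 hx0, mul_le_mul_of_nonneg_right e5.2 hx0]

lemma ae_good (N m : ℝ) (hN : 0 < N) (hm : 0 < m) :
    ∀ᵐ p : ℝ × ℝ, (∀ k : ℤ, 2 * (N * p.2) ≠ k) ∧ (∀ k : ℤ, 2 * (N * p.2 - m * p.1) ≠ k) := by
  have hms : ∀ (a b : ℝ) (k : ℤ), MeasurableSet {p : ℝ × ℝ | 2 * (a * p.2 - b * p.1) ≠ k} := by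
    intro a b k
    exact (measurableSet_eq_fun (f := fun p : ℝ × ℝ => 2 * (a * p.2 - b * p.1)) (g := fun _ => (k : ℝ))
      (by fun_prop) (by fun_prop)).compl
  have key : ∀ (b : ℝ) (k : ℤ), ∀ᵐ p : ℝ × ℝ, 2 * (N * p.2 - b * p.1) ≠ k := by
    intro b k
    rw [Measure.volume_eq_prod]
    refine (Measure.ae_prod_mem_iff_ae_ae_mem (hms N b k)).2 ?_
    filter_upwards with x
    have : ∀ᵐ y : ℝ, y ≠ (k / 2 + b * x) / N := by
      simp [ae_iff]
    filter_upwards [this] with y hy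
    change 2 * (N * y - b * x) ≠ k
    contrapose! hy
    field_simp
    linarith
  rw [Filter.eventually_and, ae_all_iff, ae_all_iff]
  refine ⟨fun k => ?_, fun k => key m k⟩
  filter_upwards [key 0 k] with p hp
  simpa using hp

/-- First left endpoint data of the family, with `N = q ^ 2` and `m = q`. -/
noncomputable def B1 (q : ℕ) : Fin (q ^ 2) ⊕ Fin (q ^ 2 - q) → ℝ
  | .inl k => (k : ℕ) / (q : ℝ) ^ 2
  | .inr k => ((k : ℕ) + 1 / 2) / (q : ℝ) ^ 2

/-- Right endpoint data of the family. -/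
noncomputable def B2 (q : ℕ) : Fin (q ^ 2) ⊕ Fin (q ^ 2 - q) → ℝ
  | .inl k => (k : ℕ) / (q : ℝ) ^ 2
  | .inr k => ((k : ℕ) + 1 / 2) / (q : ℝ) ^ 2 + 1 / q

/-- Union of the family. -/
noncomputable def UU (q : ℕ) : Set (ℝ × ℝ) := ⋃ i, Par (B1 q i) (B2 q i) (1 / (2 * (q : ℝ) ^ 2))

lemma good_fam (q : ℕ) (hq : 2 ≤ q) (i) : GoodPar (B1 q i) (B2 q i) (1 / (2 * (q : ℝ) ^ 2)) := by
  have hq0 : (0 : ℝ) < q := by positivity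
  have hq2 : (0 : ℝ) < (q : ℝ) ^ 2 := by positivity
  refine ⟨by positivity, ?_, ?_⟩ <;> rcases i with k | k <;> simp only [B1, B2]
  · have h : ((k : ℕ) : ℝ) + 1 ≤ (q : ℝ) ^ 2 := by exact_mod_cast k.2
    refine ⟨by positivity, ?_⟩
    field_simp; linarith
  · have h : ((k : ℕ) : ℝ) + 1 + q ≤ (q : ℝ) ^ 2 := by
      have := k.2
      exact_mod_cast (by omega : (k : ℕ) + 1 + q ≤ q ^ 2)
    refine ⟨by positivity, ?_⟩
    field_simp; linarith
  · have h : ((k : ℕ) : ℝ) + 1 ≤ (q : ℝ) ^ 2 := by exact_mod_cast k.2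
    refine ⟨by positivity, ?_⟩
    field_simp; linarith
  · have h : ((k : ℕ) : ℝ) + 1 + q ≤ (q : ℝ) ^ 2 := by
      have := k.2
      exact_mod_cast (by omega : (k : ℕ) + 1 + q ≤ q ^ 2)
    refine ⟨by positivity, ?_⟩
    have e : ((k : ℕ) + 1 / 2) / (q : ℝ) ^ 2 + 1 / q = ((k : ℕ) + 1 / 2 + q) / (q : ℝ) ^ 2 := by
      field_simp
    rw [e]
    field_simp; linarith

lemma mem_inl (q : ℕ) (hq : 2 ≤ q) (k) (x y : ℝ) (hx : x ∈ Icc (0 : ℝ) 1) :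
    (x, y) ∈ Par (B1 q (.inl k)) (B2 q (.inl k)) (1 / (2 * (q : ℝ) ^ 2)) ↔
      ((k : ℕ) : ℝ) ≤ (q : ℝ) ^ 2 * y ∧ (q : ℝ) ^ 2 * y ≤ (k : ℕ) + 1 / 2 := by
  have hq0 : (0 : ℝ) < q := by positivity
  have hq2 : (0 : ℝ) < (q : ℝ) ^ 2 := by positivity
  rw [mem_Par _ _ _ _ _ (by positivity)]
  simp only [B1, B2, hx.1, hx.2, true_and, sub_self, zero_mul, add_zero]
  have e : (k : ℕ) / (q : ℝ) ^ 2 + 1 / (2 * (q : ℝ) ^ 2) = ((k : ℕ) + 1 / 2) / (q : ℝ) ^ 2 := by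
    field_simp
  rw [e, div_le_iff₀' hq2, le_div_iff₀' hq2]

lemma mem_inr (q : ℕ) (hq : 2 ≤ q) (k) (x y : ℝ) (hx : x ∈ Icc (0 : ℝ) 1) :
    (x, y) ∈ Par (B1 q (.inr k)) (B2 q (.inr k)) (1 / (2 * (q : ℝ) ^ 2)) ↔
      ((k : ℕ) : ℝ) + 1 / 2 ≤ (q : ℝ) ^ 2 * y - q * x ∧
        (q : ℝ) ^ 2 * y - q * x ≤ (k : ℕ) + 1 := by
  have hq0 : (0 : ℝ) < q := by positivity
  have hq2 : (0 : ℝ) < (q : ℝ) ^ 2 := by positivity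
  rw [mem_Par _ _ _ _ _ (by positivity)]
  simp only [B1, B2, hx.1, hx.2, true_and, add_sub_cancel_left]
  have e0 : ((k : ℕ) + 1 / 2) / (q : ℝ) ^ 2 + 1 / q * x
      = ((k : ℕ) + 1 / 2 + q * x) / (q : ℝ) ^ 2 := by
    field_simp
  have e : ((k : ℕ) + 1 / 2 + q * x) / (q : ℝ) ^ 2 + 1 / (2 * (q : ℝ) ^ 2)
      = ((k : ℕ) + 1 + q * x) / (q : ℝ) ^ 2 := by
    field_simp; ring
  rw [e0, e, div_le_iff₀' hq2, le_div_iff₀' hq2, le_sub_iff_add_le, sub_le_iff_le_add]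

lemma UU_iff (q : ℕ) (hq : 2 ≤ q) (x y : ℝ) (hx : x ∈ Icc (0 : ℝ) 1)
    (hy : y ∈ Icc (1 / (q : ℝ)) (1 - 1 / q))
    (h1 : ∀ k : ℤ, 2 * ((q : ℝ) ^ 2 * y) ≠ k)
    (h2 : ∀ k : ℤ, 2 * ((q : ℝ) ^ 2 * y - q * x) ≠ k) :
    (x, y) ∈ UU q ↔ (x, y) ∈ ESet ((q : ℝ) ^ 2) q := by
  have hq0 : (0 : ℝ) < q := by positivity
  have hq2 : (0 : ℝ) < (q : ℝ) ^ 2 := by positivity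
  have hqq : q ≤ q ^ 2 := by nlinarith
  have hylo : (q : ℝ) ≤ (q : ℝ) ^ 2 * y := by
    have := mul_le_mul_of_nonneg_left hy.1 hq2.le
    calc (q : ℝ) = (q : ℝ) ^ 2 * (1 / q) := by field_simp
      _ ≤ _ := this
  have hyhi : (q : ℝ) ^ 2 * y ≤ (q : ℝ) ^ 2 - q := by
    have := mul_le_mul_of_nonneg_left hy.2 hq2.le
    calc _ ≤ (q : ℝ) ^ 2 * (1 - 1 / q) := this
      _ = _ := by field_simp
  have hqx0 : 0 ≤ (q : ℝ) * x := mul_nonneg hq0.le hx.1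
  have hqx1 : (q : ℝ) * x ≤ q := by nlinarith [hx.2]
  unfold UU ESet
  simp only [mem_iUnion, mem_ofPred_eq]
  constructor
  · rintro ⟨k | k, hk⟩
    · rw [mem_inl q hq k x y hx] at hk
      left
      have hne := h1 (2 * (k : ℕ) + 1)
      have hlt : (q : ℝ) ^ 2 * y < (k : ℕ) + 1 / 2 := by
        refine lt_of_le_of_ne hk.2 fun h => hne ?_
        push_cast; linarith
      have : Int.fract ((q : ℝ) ^ 2 * y) = (q : ℝ) ^ 2 * y - (k : ℕ) := by
        rw [Int.fract_eq_iff]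
        exact ⟨by linarith [hk.1], by linarith, (k : ℕ), by push_cast; ring⟩
      rw [this]; linarith
    · rw [mem_inr q hq k x y hx] at hk
      right
      have hne := h2 (2 * (k : ℕ) + 2)
      have hlt : (q : ℝ) ^ 2 * y - q * x < (k : ℕ) + 1 := by
        refine lt_of_le_of_ne hk.2 fun h => hne ?_
        push_cast; linarith
      have : Int.fract ((q : ℝ) ^ 2 * y - q * x) = (q : ℝ) ^ 2 * y - q * x - (k : ℕ) := by
        rw [Int.fract_eq_iff]
        exact ⟨by linarith [hk.1], by linarith, (k : ℕ), by push_cast; ring⟩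
      rw [this]; linarith [hk.1]
  · rintro (h | h)
    · have hf := Int.floor_add_fract ((q : ℝ) ^ 2 * y)
      have hf0 := Int.fract_nonneg ((q : ℝ) ^ 2 * y)
      obtain ⟨k, hk⟩ := Int.eq_ofNat_of_zero_le
        (Int.floor_nonneg.2 (by linarith : 0 ≤ (q : ℝ) ^ 2 * y))
      rw [hk] at hf
      push_cast at hf
      have hkN : k < q ^ 2 := by
        have : (k : ℝ) < (q : ℝ) ^ 2 := by linarith
        exact_mod_cast this
      refine ⟨.inl ⟨k, hkN⟩, (mem_inl q hq _ x y hx).2 ⟨?_, ?_⟩⟩ <;> simp only <;> linarith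
    · have hf := Int.floor_add_fract ((q : ℝ) ^ 2 * y - q * x)
      have hf0 := Int.fract_nonneg ((q : ℝ) ^ 2 * y - q * x)
      have hf1 := Int.fract_lt_one ((q : ℝ) ^ 2 * y - q * x)
      obtain ⟨k, hk⟩ := Int.eq_ofNat_of_zero_le
        (Int.floor_nonneg.2 (by linarith : 0 ≤ (q : ℝ) ^ 2 * y - q * x))
      rw [hk] at hf
      push_cast at hf
      have hkN : k < q ^ 2 - q := by
        have : (k : ℝ) + q < (q : ℝ) ^ 2 := by linarith
        have : k + q < q ^ 2 := by exact_mod_cast this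
        omega
      refine ⟨.inr ⟨k, hkN⟩, (mem_inr q hq _ x y hx).2 ⟨?_, ?_⟩⟩ <;> simp only <;> linarith

lemma UU_vol (q : ℕ) (hq : 2 ≤ q) (x₀ y₀ : ℝ) (hx : x₀ ∈ Icc (0 : ℝ) 1)
    (hy : y₀ ∈ Icc (0 : ℝ) 1) :
    |volume.real (UU q ∩ Icc (0 : ℝ) x₀ ×ˢ Icc (0 : ℝ) y₀) - 3 / 4 * (x₀ * y₀)| ≤ 3 / q := by
  have hq0 : (0 : ℝ) < q := by positivity
  have hq1 : (1 : ℝ) ≤ q := by exact_mod_cast (by omega : 1 ≤ q)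
  set B := Icc (0 : ℝ) x₀ ×ˢ Icc (0 : ℝ) y₀ with hB
  have hBf : volume B ≠ ⊤ := (isCompact_Icc.prod isCompact_Icc).measure_lt_top.ne
  set Bad : Set (ℝ × ℝ) := Icc (0 : ℝ) 1 ×ˢ Icc (0 : ℝ) (1 / q) ∪
    Icc (0 : ℝ) 1 ×ˢ Icc (1 - 1 / (q : ℝ)) 1 with hBad
  have hBadf : volume Bad ≠ ⊤ :=
    ((isCompact_Icc.prod isCompact_Icc).union (isCompact_Icc.prod isCompact_Icc)).measure_lt_top.ne
  have hBadv : volume.real Bad ≤ 2 / q := by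
    refine (measureReal_union_le _ _).trans ?_
    rw [Measure.volume_eq_prod, measureReal_prod_prod, measureReal_prod_prod]
    have : (0 : ℝ) ≤ (q : ℝ)⁻¹ := by positivity
    simp [this]
    apply le_of_eq; ring
  have hae := ae_good ((q : ℝ) ^ 2) q (by positivity) hq0
  have hcase : ∀ p ∈ B, p ∈ Bad ∨ (p.1 ∈ Icc (0 : ℝ) 1 ∧ p.2 ∈ Icc (1 / (q : ℝ)) (1 - 1 / q)) := by
    rintro ⟨x, y⟩ ⟨⟨hx0, hx1⟩, ⟨hy0, hy1⟩⟩
    simp only at hx0 hx1 hy0 hy1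
    have hX : x ∈ Icc (0 : ℝ) 1 := ⟨hx0, hx1.trans hx.2⟩
    by_cases c1 : y ≤ 1 / (q : ℝ)
    · exact Or.inl (Or.inl ⟨hX, hy0, c1⟩)
    by_cases c2 : 1 - 1 / (q : ℝ) ≤ y
    · exact Or.inl (Or.inr ⟨hX, c2, hy1.trans hy.2⟩)
    · exact Or.inr ⟨hX, (not_le.1 c1).le, (not_le.1 c2).le⟩
  have mono : ∀ A A' : Set (ℝ × ℝ), (∀ᵐ p : ℝ × ℝ, p ∈ A ∩ B → p ∈ A' ∩ B ∪ Bad) →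
      volume.real (A ∩ B) ≤ volume.real (A' ∩ B) + 2 / q := by
    intro A A' h
    have hfin : volume (A' ∩ B ∪ Bad) ≠ ⊤ :=
      measure_union_ne_top (measure_ne_top_of_subset inter_subset_right hBf) hBadf
    have h1 : volume.real (A ∩ B) ≤ volume.real (A' ∩ B ∪ Bad) :=
      ENNReal.toReal_mono hfin (measure_mono_ae h)
    have h2 := measureReal_union_le (μ := volume) (A' ∩ B) Bad
    linarith
  have m1 := mono (UU q) (ESet ((q : ℝ) ^ 2) q) (by
    filter_upwards [hae] with p hp hpm
    rcases hcase p hpm.2 with h | h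
    · exact Or.inr h
    · exact Or.inl ⟨(UU_iff q hq p.1 p.2 h.1 h.2 hp.1 hp.2).1 hpm.1, hpm.2⟩)
  have m2 := mono (ESet ((q : ℝ) ^ 2) q) (UU q) (by
    filter_upwards [hae] with p hp hpm
    rcases hcase p hpm.2 with h | h
    · exact Or.inr h
    · exact Or.inl ⟨(UU_iff q hq p.1 p.2 h.1 h.2 hp.1 hp.2).2 hpm.1, hpm.2⟩)
  have e := ESet_vol ((q : ℝ) ^ 2) q x₀ y₀ (by positivity) hq0 hx hy
  have b1 : 1 / (4 * (q : ℝ)) + 1 / (4 * (q : ℝ) ^ 2) ≤ 1 / q := by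
    field_simp; nlinarith
  have b2 : 3 / (q : ℝ) = 1 / q + 2 / q := by ring
  rw [abs_le] at e ⊢
  rw [b2]
  constructor <;> linarith [e.1, e.2]

lemma cover_fam (q : ℕ) (hq : 2 ≤ q) (y : ℝ) (hy : y ∈ Ico (0 : ℝ) (1 - 1 / q)) :
    ∃ i, y ∈ Icc (B1 q i) (B1 q i + 1 / (2 * (q : ℝ) ^ 2)) := by
  have hq0 : (0 : ℝ) < q := by positivity
  have hq2 : (0 : ℝ) < (q : ℝ) ^ 2 := by positivity
  have hyhi : (q : ℝ) ^ 2 * y < (q : ℝ) ^ 2 - q := by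
    have := mul_lt_mul_of_pos_left hy.2 hq2
    calc _ < (q : ℝ) ^ 2 * (1 - 1 / q) := this
      _ = _ := by field_simp
  have hf := Int.floor_add_fract ((q : ℝ) ^ 2 * y)
  have hf0 := Int.fract_nonneg ((q : ℝ) ^ 2 * y)
  have hf1 := Int.fract_lt_one ((q : ℝ) ^ 2 * y)
  obtain ⟨k, hk⟩ := Int.eq_ofNat_of_zero_le
    (Int.floor_nonneg.2 (mul_nonneg hq2.le hy.1 : 0 ≤ (q : ℝ) ^ 2 * y))
  rw [hk] at hf
  push_cast at hf
  have hkN : k < q ^ 2 - q := by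
    have : (k : ℝ) + q < (q : ℝ) ^ 2 := by linarith
    have : k + q < q ^ 2 := by exact_mod_cast this
    omega
  by_cases c : Int.fract ((q : ℝ) ^ 2 * y) ≤ 1 / 2
  · refine ⟨.inl ⟨k, by omega⟩, ?_⟩
    simp only [B1]
    have e : (k : ℝ) / (q : ℝ) ^ 2 + 1 / (2 * (q : ℝ) ^ 2) = (k + 1 / 2) / (q : ℝ) ^ 2 := by
      field_simp
    rw [e, mem_Icc, div_le_iff₀' hq2, le_div_iff₀' hq2]
    constructor <;> linarith
  · refine ⟨.inr ⟨k, hkN⟩, ?_⟩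
    simp only [B1]
    have e : ((k : ℝ) + 1 / 2) / (q : ℝ) ^ 2 + 1 / (2 * (q : ℝ) ^ 2) = (k + 1) / (q : ℝ) ^ 2 := by
      field_simp; ring
    rw [e, mem_Icc, div_le_iff₀' hq2, le_div_iff₀' hq2]
    constructor <;> linarith

theorem stmt10 (ε : ℝ) (hε : 0 < ε) :
    ∃ (S : ℕ) (b₁ b₂ δ : Fin S → ℝ),
      (∀ s, GoodPar (b₁ s) (b₂ s) (δ s)) ∧
      ({0} : Set ℝ) ×ˢ Icc ε (1 - ε) ⊆ ⋃ s, ({0} : Set ℝ) ×ˢ Icc (b₁ s) (b₁ s + δ s) ∧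
      (∀ x₀ ∈ Icc (0 : ℝ) 1,
        |(volume ((⋃ s, Par (b₁ s) (b₂ s) (δ s)) ∩
            Icc (0 : ℝ) x₀ ×ˢ Icc (0 : ℝ) 1)).toReal -
          3 / 4 * (volume (Icc (0 : ℝ) x₀ ×ˢ Icc (0 : ℝ) 1)).toReal| < ε) ∧
      ∀ y₀ ∈ Icc (0 : ℝ) 1,
        |(volume ((⋃ s, Par (b₁ s) (b₂ s) (δ s)) ∩
            Icc (0 : ℝ) 1 ×ˢ Icc (0 : ℝ) y₀)).toReal -
          3 / 4 * (volume (Icc (0 : ℝ) 1 ×ˢ Icc (0 : ℝ) y₀)).toReal| < ε := by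
  obtain ⟨n, hn⟩ := exists_nat_gt (3 / ε)
  set q := n + 2 with hqd
  have hq : 2 ≤ q := by omega
  have hq0 : (0 : ℝ) < q := by positivity
  have hnq : (n : ℝ) < q := by exact_mod_cast (by omega : n < q)
  have h3 : 3 / (q : ℝ) < ε := by
    rw [div_lt_iff₀ hε] at hn
    rw [div_lt_iff₀ hq0]
    nlinarith
  have h1q : 1 / (q : ℝ) < ε := lt_of_le_of_lt (by gcongr; norm_num) h3
  let e := (Fintype.equivFin (Fin (q ^ 2) ⊕ Fin (q ^ 2 - q))).symm
  have hU : (⋃ s, Par (B1 q (e s)) (B2 q (e s)) (1 / (2 * (q : ℝ) ^ 2))) = UU q :=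
    e.surjective.iUnion_comp (fun i => Par (B1 q i) (B2 q i) (1 / (2 * (q : ℝ) ^ 2)))
  refine ⟨_, fun s => B1 q (e s), fun s => B2 q (e s), fun _ => 1 / (2 * (q : ℝ) ^ 2),
    fun s => good_fam q hq (e s), ?_, ?_, ?_⟩
  · rintro ⟨x, y⟩ ⟨hx, hy⟩
    obtain ⟨i, hi⟩ := cover_fam q hq y ⟨hε.le.trans hy.1, by linarith [hy.2]⟩
    refine mem_iUnion.2 ⟨e.symm i, hx, ?_⟩
    simpa using hi
  · intro x₀ hx
    have h := UU_vol q hq x₀ 1 hx (by simp)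
    rw [← box_vol x₀ 1 hx.1 zero_le_one] at h
    rw [hU]
    exact lt_of_le_of_lt h h3
  · intro y₀ hy
    have h := UU_vol q hq 1 y₀ (by simp) hy
    rw [← box_vol 1 y₀ zero_le_one hy.1] at h
    rw [hU]
    exact lt_of_le_of_lt h h3
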